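/- Let a, τ, r be integers with 1 < a ≤ τ, 1 ≤ r < τ and τ + 1 < a(r+1), and let q ≥ r + a − 1 be a prime power. Then there exists an (a, τ, r) LRSC over the field F_{q^{2^{a−2}}} with k = τ+1−a and n = τ+1, i.e., of rate (τ+1−a)/(τ+1). Since min{(τ+1−a)/(τ+1), r/(r+1)} = (τ+1−a)/(τ+1) in this parameter range, this LRSC is rate-optimal. -/

import Mathlib

/-- A packet-level code with a causal systematic encoder: the parity part of the
coded packet at time `t` is a fixed function of the message packets at times `≤ t`. -/
structure PacketCode (F : Type) (k n : ℕ) where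
  parity : (ℤ → Fin k → F) → ℤ → Fin (n - k) → F
  causal : ∀ (m m' : ℤ → Fin k → F) (t : ℤ),
    (∀ t' ≤ t, m t' = m' t') → parity m t = parity m' t

/-- A valid message stream vanishes at negative times. -/
def IsMsgStream {F : Type} [Zero F] {k : ℕ} (m : ℤ → Fin k → F) : Prop :=
  ∀ t < 0, m t = 0

/-- `(a, τ)` streaming-code property. -/
def IsSC {F : Type} [Zero F] {k n : ℕ} (C : PacketCode F k n) (a τ : ℕ) : Prop :=
  ∀ m m' : ℤ → Fin k → F, IsMsgStream m → IsMsgStream m' →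
    ∀ t : ℤ, 0 ≤ t →
      ∀ E : Finset ℤ, (∀ x ∈ E, t ≤ x ∧ x ≤ t + τ) → t ∈ E → E.card ≤ a →
        (∀ t' < t, m t' = m' t') →
        (∀ t' : ℤ, t ≤ t' → t' ≤ t + τ → t' ∉ E →
          m t' = m' t' ∧ C.parity m t' = C.parity m' t') →
        m t = m' t

/-- `(a, τ, r)` locally recoverable streaming code. -/
def IsLRSC {F : Type} [Zero F] {k n : ℕ} (C : PacketCode F k n) (a τ r : ℕ) : Prop :=
  IsSC C a τ ∧ IsSC C 1 r

/-!
Cut each diagonal of the packet stream into segments of at most `r + 1` symbols, with `a` segments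
to every `τ + 1` symbols, and let the last symbol of each segment be a parity symbol. The check
closing a segment has coefficients `1` on that segment, which gives recovery of a single erasure
with delay `r`, and on the message symbols of the `d`-th segment before it the entries of row `d` of
a Cauchy matrix, scaled by a multiplier `w d`.

To decode the first of at most `a` erasures, take the least `i` such that the first `i` segments
contain at most `i` erasures, and consider the first `i` checks. If exactly as many of these
erasures as there are rows to handle them lie in the first `t < i` segments, the system is block
triangular and one recurses on both blocks. Otherwise one erasure can be spared, and the topmost
check may be replaced by its unscaled part on the first segment: its multiplier `w (i - 1)` is not
in the field generated by all the other coefficients, so it cannot create a linear dependence.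
In the end only a system on a single segment is left, with a Cauchy matrix. Choosing each new
multiplier in a quadratic extension gives the field size `q ^ 2 ^ (a - 2)`.
-/

section LinearAlgebra

variable {L X ι : Type*} [Field L]

/-- The columns indexed by `C` of the matrix with rows `ρ j`, `j ∈ J`, are linearly independent,
stated as triviality of the kernel, which is the form in which erasures are decoded. -/
def IndepColumns (J : Finset ι) (ρ : ι → X → L) (C : Finset X) : Prop :=
  ∀ z : X → L, (∀ j ∈ J, ∑ x ∈ C, ρ j x * z x = 0) → ∀ x ∈ C, z x = 0

lemma IndepColumns.congr {J : Finset ι} {ρ ρ' : ι → X → L} {C : Finset X}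
    (h : IndepColumns J ρ C) (hρ : ∀ j ∈ J, ∀ x ∈ C, ρ j x = ρ' j x) : IndepColumns J ρ' C := by
  refine fun z hz ↦ h z fun j hj ↦ ?_
  rw [← hz j hj]
  exact Finset.sum_congr rfl fun x hx ↦ by rw [hρ j hj x hx]

lemma IndepColumns.of_block_triangular {ι₁ ι₂ : Type*} {J : Finset ι} {J₁ : Finset ι₁}
    {J₂ : Finset ι₂} {ρ : ι → X → L} {ρ₁ : ι₁ → X → L} {ρ₂ : ι₂ → X → L} {C : Finset X}
    (p : X → Prop) [DecidablePred p]
    (h₁ : IndepColumns J₁ ρ₁ (C.filter p)) (h₂ : IndepColumns J₂ ρ₂ (C.filter fun x ↦ ¬ p x))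
    (hρ₁ : ∀ j₁ ∈ J₁, ∃ j ∈ J, ∀ x ∈ C, ρ j x = if p x then ρ₁ j₁ x else 0)
    (hρ₂ : ∀ j₂ ∈ J₂, ∃ j ∈ J, ∀ x ∈ C, ¬ p x → ρ j x = ρ₂ j₂ x) : IndepColumns J ρ C := by
  intro z hz
  have zero_of_p : ∀ x ∈ C.filter p, z x = 0 := by
    refine h₁ z fun j₁ hj₁ ↦ ?_
    obtain ⟨j, hj, hρ⟩ := hρ₁ j₁ hj₁
    rw [← hz j hj, Finset.sum_filter]
    exact Finset.sum_congr rfl fun x hx ↦ by rw [hρ x hx, ite_mul, zero_mul]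
  have zero_of_not_p : ∀ x ∈ C.filter fun x ↦ ¬ p x, z x = 0 := by
    refine h₂ z fun j₂ hj₂ ↦ ?_
    obtain ⟨j, hj, hρ⟩ := hρ₂ j₂ hj₂
    rw [← hz j hj, Finset.sum_filter]
    refine Finset.sum_congr rfl fun x hx ↦ ?_
    split_ifs with hp
    · rw [zero_of_p x (Finset.mem_filter.2 ⟨hx, hp⟩), mul_zero]
    · rw [hρ x hx hp]
  intro x hx
  by_cases hp : p x
  · exact zero_of_p x (Finset.mem_filter.2 ⟨hx, hp⟩)
  · exact zero_of_not_p x (Finset.mem_filter.2 ⟨hx, hp⟩)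

lemma exists_ne_zero_kernel_mem_subfield (K : Subfield L) {J : Finset ι} {ρ : ι → X → L}
    {C : Finset X} (hρ : ∀ j ∈ J, ∀ x ∈ C, ρ j x ∈ K) (hcard : J.card < C.card) :
    ∃ y : X → L, (∀ x, y x ∈ K) ∧ (∃ x ∈ C, y x ≠ 0) ∧ ∀ j ∈ J, ∑ x ∈ C, ρ j x * y x = 0 := by
  classical
  let A : Matrix J C K := Matrix.of fun j x ↦ ⟨ρ j x, hρ j j.2 x x.2⟩
  obtain ⟨y, hy, hy0⟩ := Submodule.exists_mem_ne_zero_of_ne_bot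
    (LinearMap.ker_ne_bot_of_finrank_lt (f := A.mulVecLin) (by simpa using hcard))
  refine ⟨fun x ↦ if hx : x ∈ C then y ⟨x, hx⟩ else 0, fun x ↦ ?_, ?_, fun j hj ↦ ?_⟩
  · dsimp only
    split_ifs
    exacts [SetLike.coe_mem _, K.zero_mem]
  · obtain ⟨x, hx⟩ := Function.ne_iff.1 hy0
    exact ⟨x, x.2, by simpa using hx⟩
  · have hrow : ∑ x : C, ρ j x * (y x : L) = 0 := by
      simpa [A, Matrix.mulVec, dotProduct] using congrArg K.subtype (congrFun hy ⟨j, hj⟩)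
    rw [← Finset.sum_coe_sort C, ← hrow]
    exact Finset.sum_congr rfl fun x _ ↦ by simp

lemma IndepColumns.exists_spanning_kernel_erase [DecidableEq ι] (K : Subfield L) {J : Finset ι}
    {ρ : ι → X → L} {C : Finset X} (hρ : ∀ j ∈ J, ∀ x ∈ C, ρ j x ∈ K) (hcard : C.card = J.card)
    {j₀ : ι} (hj₀ : j₀ ∈ J) (hind : IndepColumns J ρ C) :
    ∃ y : X → L, (∀ x, y x ∈ K) ∧ ∑ x ∈ C, ρ j₀ x * y x ≠ 0 ∧
      ∀ z : X → L, (∀ j ∈ J.erase j₀, ∑ x ∈ C, ρ j x * z x = 0) →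
        ∃ b : L, ∀ x ∈ C, z x = b * y x := by
  obtain ⟨y, hyK, ⟨x₁, hx₁, hyx₁⟩, hy⟩ := exists_ne_zero_kernel_mem_subfield K
    (J := J.erase j₀) (fun j hj ↦ hρ j (Finset.mem_of_mem_erase hj))
    (by have := Finset.card_erase_lt_of_mem hj₀; omega)
  have hc : ∑ x ∈ C, ρ j₀ x * y x ≠ 0 := fun hc ↦ hyx₁ <| hind y (fun j hj ↦ by
    obtain rfl | hne := eq_or_ne j j₀
    exacts [hc, hy j (Finset.mem_erase.2 ⟨hne, hj⟩)]) x₁ hx₁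
  refine ⟨y, hyK, hc, fun z hz ↦ ?_⟩
  set b := (∑ x ∈ C, ρ j₀ x * z x) / ∑ x ∈ C, ρ j₀ x * y x
  refine ⟨b, fun x hx ↦ sub_eq_zero.1 (hind (fun x ↦ z x - b * y x) (fun j hj ↦ ?_) x hx)⟩
  have expand : ∑ x ∈ C, ρ j x * (z x - b * y x) =
      ∑ x ∈ C, ρ j x * z x - b * ∑ x ∈ C, ρ j x * y x := by
    rw [Finset.mul_sum, ← Finset.sum_sub_distrib]
    exact Finset.sum_congr rfl fun x _ ↦ by ring
  rw [expand]
  obtain rfl | hne := eq_or_ne j j₀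
  · exact sub_eq_zero.2 (div_mul_cancel₀ _ hc).symm
  · have hj' : j ∈ J.erase j₀ := Finset.mem_erase.2 ⟨hne, hj⟩
    rw [hz j hj', hy j hj', mul_zero, sub_zero]

/-- The other rows have a one-dimensional kernel, spanned by a vector `y` with entries in `K`. The
new row takes the value `α * c + d` on it with `c, d ∈ K` and `c ≠ 0`, nonzero because `α ∉ K`. -/
lemma IndepColumns.update_row [DecidableEq ι] (K : Subfield L) {α : L} (hα : α ∉ K) {J : Finset ι}
    {ρ : ι → X → L} {C : Finset X} (hρ : ∀ j ∈ J, ∀ x ∈ C, ρ j x ∈ K) {h : X → L}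
    (hh : ∀ x ∈ C, h x ∈ K) (hcard : C.card = J.card) {j₀ : ι} (hj₀ : j₀ ∈ J)
    (hind : IndepColumns J ρ C) : IndepColumns J (Function.update ρ j₀ (α • ρ j₀ + h)) C := by
  obtain ⟨y, hyK, hc, hspan⟩ := hind.exists_spanning_kernel_erase K hρ hcard hj₀
  set c := ∑ x ∈ C, ρ j₀ x * y x
  set d := ∑ x ∈ C, h x * y x
  have hcK : c ∈ K := K.sum_mem fun x hx ↦ K.mul_mem (hρ j₀ hj₀ x hx) (hyK x)
  have hdK : d ∈ K := K.sum_mem fun x hx ↦ K.mul_mem (hh x hx) (hyK x)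
  have hne : α * c + d ≠ 0 := fun h0 ↦ hα <| by
    rw [show α = -d / c by field_simp; linear_combination h0]
    exact K.div_mem (K.neg_mem hdK) hcK
  intro z hz
  obtain ⟨b, hzb⟩ := hspan z fun j hj ↦ by
    simpa [Finset.ne_of_mem_erase hj] using hz j (Finset.mem_of_mem_erase hj)
  have new_row : b * (α * c + d) = 0 := by
    have hzj := hz j₀ hj₀
    rw [Function.update_self] at hzj
    rw [← hzj, Finset.mul_sum, ← Finset.sum_add_distrib, Finset.mul_sum]
    refine Finset.sum_congr rfl fun x hx ↦ ?_
    rw [hzb x hx, Pi.add_apply, Pi.smul_apply, smul_eq_mul]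
    ring
  have hb : b = 0 := (mul_eq_zero.1 new_row).resolve_right hne
  exact fun x hx ↦ by rw [hzb x hx, hb, zero_mul]

end LinearAlgebra

section Cauchy

variable {L X : Type*} [Field L]

/-- Read `z` as the weighted values of the interpolation polynomial with nodes `v`: the sums at the
poles are, up to nonzero factors, the values of that polynomial at the poles. -/
lemma exists_polynomial_of_cauchy {s : Finset X} {v : X → L}
    (hv : Set.InjOn v s) (z : X → L) {P : Finset L} (hP : ∀ y ∈ P, ∀ i ∈ s, y ≠ v i)
    (hz : ∀ y ∈ P, ∑ i ∈ s, (y - v i)⁻¹ * z i = 0) :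
    ∃ Q : Polynomial L, Q.degree < s.card ∧ Q.coeff (s.card - 1) = ∑ i ∈ s, z i ∧
      (∀ y ∈ P, Q.eval y = 0) ∧ (Q = 0 → ∀ i ∈ s, z i = 0) := by
  classical
  let c : X → L := fun i ↦ z i / Lagrange.nodalWeight s v i
  let Q := Lagrange.interpolate s v c
  have weight_mul : ∀ i ∈ s, Lagrange.nodalWeight s v i * c i = z i := fun i hi ↦
    mul_div_cancel₀ _ (Lagrange.nodalWeight_ne_zero hv hi)
  have eval_node : ∀ i ∈ s, Q.eval (v i) = c i := fun i hi ↦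
    Lagrange.eval_interpolate_at_node c hv hi
  have hdeg : Q.degree < s.card := Lagrange.degree_interpolate_lt c hv
  refine ⟨Q, hdeg, ?_, fun y hy ↦ ?_, fun hQ i hi ↦ ?_⟩
  · rw [Lagrange.coeff_eq_sum hv hdeg]
    refine Finset.sum_congr rfl fun i hi ↦ ?_
    rw [eval_node i hi, ← weight_mul i hi, Lagrange.nodalWeight, Finset.prod_inv_distrib,
      div_eq_inv_mul]
  · have sum_eq : ∑ i ∈ s, Lagrange.nodalWeight s v i * (y - v i)⁻¹ * c i = 0 := by
      rw [← hz y hy]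
      exact Finset.sum_congr rfl fun i hi ↦ by rw [← weight_mul i hi]; ring
    rw [Lagrange.eval_interpolate_not_at_node c (hP y hy), sum_eq, mul_zero]
  · rw [← weight_mul i hi, ← eval_node i hi, hQ, Polynomial.eval_zero, mul_zero]

lemma eq_zero_of_cauchy {s : Finset X} {v : X → L} (hv : Set.InjOn v s) {z : X → L}
    {P : Finset L} (hP : ∀ y ∈ P, ∀ i ∈ s, y ≠ v i) (hcard : s.card ≤ P.card)
    (hz : ∀ y ∈ P, ∑ i ∈ s, (y - v i)⁻¹ * z i = 0) : ∀ i ∈ s, z i = 0 := by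
  obtain ⟨Q, hdeg, -, hroot, hzero⟩ := exists_polynomial_of_cauchy hv z hP hz
  exact hzero (Polynomial.eq_zero_of_degree_lt_of_eval_finset_eq_zero P
    (hdeg.trans_le (by exact_mod_cast hcard)) hroot)

lemma eq_zero_of_cauchy_of_sum_eq_zero {s : Finset X} {v : X → L} (hv : Set.InjOn v s)
    {z : X → L} {P : Finset L} (hP : ∀ y ∈ P, ∀ i ∈ s, y ≠ v i) (hcard : s.card ≤ P.card + 1)
    (hsum : ∑ i ∈ s, z i = 0) (hz : ∀ y ∈ P, ∑ i ∈ s, (y - v i)⁻¹ * z i = 0) :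
    ∀ i ∈ s, z i = 0 := by
  obtain ⟨Q, hdeg, hcoeff, hroot, hzero⟩ := exists_polynomial_of_cauchy hv z hP hz
  have hdeg' : Q.degree < (P.card : WithBot ℕ) := by
    refine (Polynomial.degree_lt_iff_coeff_zero _ _).2 fun n hn ↦ ?_
    obtain hn' | hn' := (show s.card - 1 ≤ n by omega).eq_or_lt
    · rw [← hn', hcoeff, hsum]
    · exact (Polynomial.degree_lt_iff_coeff_zero _ _).1 hdeg n (by omega)
  exact hzero (Polynomial.eq_zero_of_degree_lt_of_eval_finset_eq_zero P hdeg' hroot)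

/-- The columns satisfying `inf` have their node at infinity, where `1 / (y - v x)` vanishes. -/
lemma eq_zero_of_cauchy_of_node_at_infinity {C : Finset X} {v : X → L} {inf : X → Prop}
    [DecidablePred inf] (hinf : ∀ x ∈ C, ∀ y ∈ C, inf x → inf y → x = y)
    (hv : Set.InjOn v {x | x ∈ C ∧ ¬ inf x}) {z : X → L} {P : Finset L}
    (hP : ∀ y ∈ P, ∀ x ∈ C, ¬ inf x → y ≠ v x) (hcard : C.card ≤ P.card + 1)
    (hsum : ∑ x ∈ C, z x = 0)
    (hz : ∀ y ∈ P, ∑ x ∈ C, (if inf x then 0 else (y - v x)⁻¹) * z x = 0) :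
    ∀ x ∈ C, z x = 0 := by
  classical
  by_cases hex : ∃ x ∈ C, inf x
  · obtain ⟨x₀, hx₀, hinf₀⟩ := hex
    have finite_of_mem : ∀ x ∈ C.erase x₀, x ∈ C ∧ ¬ inf x := fun x hx ↦
      have hxC := Finset.mem_of_mem_erase hx
      ⟨hxC, fun h ↦ Finset.ne_of_mem_erase hx (hinf x hxC x₀ hx₀ h hinf₀)⟩
    have finite_zero : ∀ x ∈ C.erase x₀, z x = 0 := by
      refine eq_zero_of_cauchy (hv.mono finite_of_mem)
        (fun y hy x hx ↦ hP y hy x (finite_of_mem x hx).1 (finite_of_mem x hx).2)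
        (by rw [Finset.card_erase_of_mem hx₀]; omega) fun y hy ↦ ?_
      rw [← hz y hy, ← Finset.add_sum_erase C _ hx₀, if_pos hinf₀, zero_mul, zero_add]
      exact Finset.sum_congr rfl fun x hx ↦ by rw [if_neg (finite_of_mem x hx).2]
    rw [← Finset.add_sum_erase C z hx₀, Finset.sum_eq_zero finite_zero, add_zero] at hsum
    intro x hx
    obtain rfl | hne := eq_or_ne x x₀
    exacts [hsum, finite_zero x (Finset.mem_erase.2 ⟨hne, hx⟩)]
  · have finite_of_mem : ∀ x ∈ C, x ∈ C ∧ ¬ inf x := fun x hx ↦ ⟨hx, fun h ↦ hex ⟨x, hx, h⟩⟩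
    refine eq_zero_of_cauchy_of_sum_eq_zero (hv.mono finite_of_mem)
      (fun y hy x hx ↦ hP y hy x hx (finite_of_mem x hx).2) hcard hsum fun y hy ↦ ?_
    rw [← hz y hy]
    exact Finset.sum_congr rfl fun x hx ↦ by rw [if_neg (finite_of_mem x hx).2]

/-- Entry of the Cauchy matrix extended by the all-ones row `d = 0`. Row `d ≥ 1` has the pole
`g (r + d)` and column `e` the node `g e`, except that column `0` has its node at infinity. -/
def cauchyEntry (g : ℕ → L) (r d e : ℕ) : L :=
  if d = 0 then 1 else if e = 0 then 0 else (g (r + d) - g e)⁻¹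

lemma indepColumns_cauchyEntry {g : ℕ → L} {r b : ℕ} (hg : Set.InjOn g (Set.Ico 1 (r + b)))
    {e : X → ℕ} {C : Finset X} (he : Set.InjOn e C) (her : ∀ x ∈ C, e x ≤ r) {J : Finset ℕ}
    (hJ0 : 0 ∈ J) (hJb : ∀ j ∈ J, j < b) (hcard : C.card = J.card) :
    IndepColumns J (fun j x ↦ cauchyEntry g r j (e x)) C := by
  classical
  intro z hz
  have node_mem : ∀ x ∈ C, e x ≠ 0 → e x ∈ Set.Ico 1 (r + b) := fun x hx hx0 ↦ by
    have := her x hx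
    have := hJb 0 hJ0
    exact ⟨by omega, by omega⟩
  have pole_mem : ∀ j ∈ J.erase 0, r + j ∈ Set.Ico 1 (r + b) := fun j hj ↦ by
    have := hJb j (Finset.mem_of_mem_erase hj)
    have := Finset.ne_of_mem_erase hj
    exact ⟨by omega, by omega⟩
  have pole_injOn : Set.InjOn (fun j ↦ g (r + j)) (J.erase 0) := fun i hi j hj hij ↦
    Nat.add_left_cancel (hg (pole_mem i hi) (pole_mem j hj) hij)
  refine eq_zero_of_cauchy_of_node_at_infinity (v := fun x ↦ g (e x)) (inf := fun x ↦ e x = 0)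
    (P := (J.erase 0).image fun j ↦ g (r + j))
    (fun x hx y hy hx0 hy0 ↦ he hx hy (hx0.trans hy0.symm))
    (fun x hx y hy hxy ↦ he hx.1 hy.1 (hg (node_mem x hx.1 hx.2) (node_mem y hy.1 hy.2) hxy))
    (Finset.forall_mem_image.2 fun j hj x hx hx0 hjx ↦ ?_) ?_
    (by simpa [cauchyEntry] using hz 0 hJ0) (Finset.forall_mem_image.2 fun j hj ↦ ?_)
  · have := hg (pole_mem j hj) (node_mem x hx hx0) hjx
    have := her x hx
    have := Finset.ne_of_mem_erase hj
    omega
  · rw [Finset.card_image_of_injOn pole_injOn, Finset.card_erase_add_one hJ0, hcard]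
  · simpa [cauchyEntry, Finset.ne_of_mem_erase hj] using hz j (Finset.mem_of_mem_erase hj)

end Cauchy

section Staircase

variable {X : Type*} {σ : X → ℤ} {u : ℤ} {i n t : ℕ} {C : Finset X}

/-- The counting condition under which `n` columns `C` at heights `σ ≥ u` are separated by `i`
checks, starting at height `u`, together with `n - i` rows acting at height `u` alone: for
`1 ≤ j ≤ i`, at least `j + (n - i)` columns lie below height `u + j`. It is written without
subtraction. -/
structure IsStaircase (σ : X → ℤ) (u : ℤ) (i n : ℕ) (C : Finset X) : Prop where
  card_eq : C.card = n
  le : ∀ x ∈ C, u ≤ σ x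
  count : ∀ j : ℕ, 1 ≤ j → j ≤ i → j + n ≤ (C.filter fun x ↦ σ x < u + j).card + i

lemma IsStaircase.lt (h : IsStaircase σ u i n C) (hi : 1 ≤ i) : ∀ x ∈ C, σ x < u + i := by
  have hcard := h.count i hi le_rfl
  exact Finset.card_filter_eq_iff.1
    (le_antisymm (Finset.card_filter_le _ _) (by have := h.card_eq; omega))

lemma IsStaircase.lower (h : IsStaircase σ u i n C) (hti : t ≤ i)
    (ht : (C.filter fun x ↦ σ x < u + t).card + i = t + n) :
    IsStaircase σ u t (t + n - i) (C.filter fun x ↦ σ x < u + t) where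
  card_eq := by omega
  le x hx := h.le x (Finset.mem_filter.1 hx).1
  count j hj hjt := by
    rw [Finset.filter_filter]
    have hcount := h.count j hj (hjt.trans hti)
    have hsub : (C.filter fun x ↦ σ x < u + j) ⊆
        C.filter fun x ↦ σ x < u + t ∧ σ x < u + j := by
      grind
    have := Finset.card_le_card hsub
    omega

lemma IsStaircase.upper (h : IsStaircase σ u i n C)
    (ht : (C.filter fun x ↦ σ x < u + t).card + i = t + n) :
    IsStaircase σ (u + t) (i - t) (i - t) (C.filter fun x ↦ ¬ σ x < u + t) where
  card_eq := by
    have := Finset.card_filter_add_card_filter_not (s := C) fun x ↦ σ x < u + t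
    have := h.card_eq
    omega
  le x hx := not_lt.1 (Finset.mem_filter.1 hx).2
  count j hj hji := by
    classical
    have hcount := h.count (t + j) (by omega) (by omega)
    have hsub : (C.filter fun x ↦ σ x < u + (t + j : ℕ)) ⊆ (C.filter fun x ↦ σ x < u + t) ∪
        (C.filter fun x ↦ ¬ σ x < u + t).filter fun x ↦ σ x < u + t + j := by
      grind
    have := (Finset.card_le_card hsub).trans (Finset.card_union_le _ _)
    omega

lemma IsStaircase.pred (h : IsStaircase σ u i n C)
    (hloose : ∀ t : ℕ, 1 ≤ t → t < i → (C.filter fun x ↦ σ x < u + t).card + i ≠ t + n) :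
    IsStaircase σ u (i - 1) n C where
  card_eq := h.card_eq
  le := h.le
  count j hj hji := by
    have := h.count j hj (by omega)
    have := hloose j hj (by omega)
    omega

lemma exists_isStaircase {E : Finset X} {x₀ : X} (hx₀ : x₀ ∈ E) (hE : ∀ x ∈ E, σ x₀ ≤ σ x) {b : ℕ}
    (hb : E.card ≤ b) : ∃ i : ℕ, 1 ≤ i ∧ i ≤ b ∧
      IsStaircase σ (σ x₀) i i (E.filter fun x ↦ σ x < σ x₀ + i) := by
  classical
  have hex : ∃ i : ℕ, 1 ≤ i ∧ (E.filter fun x ↦ σ x < σ x₀ + i).card ≤ i :=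
    ⟨E.card, Finset.card_pos.2 ⟨x₀, hx₀⟩, Finset.card_filter_le _ _⟩
  obtain ⟨i, ⟨hi, hcard⟩, hmin⟩ := Nat.findX hex
  have below_of_lt : ∀ j : ℕ, 1 ≤ j → j < i → j < (E.filter fun x ↦ σ x < σ x₀ + j).card :=
    fun j hj hji ↦ not_le.1 fun h ↦ hmin j hji ⟨hj, h⟩
  have below_mono : ∀ j : ℕ, j ≤ i →
      (E.filter fun x ↦ σ x < σ x₀ + j) ⊆ E.filter fun x ↦ σ x < σ x₀ + i := by
    grind
  have card_eq : (E.filter fun x ↦ σ x < σ x₀ + i).card = i := by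
    refine le_antisymm hcard ?_
    obtain rfl | hi' := hi.eq_or_lt
    · exact Finset.card_pos.2 ⟨x₀, Finset.mem_filter.2 ⟨hx₀, by omega⟩⟩
    · have := below_of_lt (i - 1) (by omega) (by omega)
      have := Finset.card_le_card (below_mono (i - 1) (by omega))
      omega
  refine ⟨i, hi, ?_, card_eq, fun x hx ↦ hE x (Finset.mem_filter.1 hx).1, fun j hj hji ↦ ?_⟩
  · by_contra hlt
    exact hmin b (by omega) ⟨(Finset.card_pos.2 ⟨x₀, hx₀⟩).trans_le hb,
      (Finset.card_filter_le _ _).trans hb⟩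
  · have hsub : (E.filter fun x ↦ σ x < σ x₀ + j) ⊆
        (E.filter fun x ↦ σ x < σ x₀ + i).filter fun x ↦ σ x < σ x₀ + j := by
      grind
    have := Finset.card_le_card hsub
    obtain rfl | hlt := hji.eq_or_lt
    · omega
    · have := below_of_lt j hj hlt
      omega

end Staircase

section CheckRows

variable {L X : Type*} [Field L]

/-- Entry in column `x` of the parity check closing segment `s`, where `x` lies in segment `σ x` at
distance `e x` from its end and `M d e` is the coefficient of a symbol `d` segments back. -/
def checkEntry (M : ℕ → ℕ → L) (σ : X → ℤ) (e : X → ℕ) (s : ℤ) (x : X) : L :=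
  if σ x ≤ s then M (s - σ x).toNat (e x) else 0

/-- Any `b` consecutive checks, starting with the one closing the segment of an erased symbol,
determine that symbol from any pattern of at most `b` erasures none of which is in an earlier
segment. Segments have at most `r + 1` positions, numbered by their distance `e` from the end. -/
def RecoversFirst (M : ℕ → ℕ → L) (r b : ℕ) : Prop :=
  ∀ (σ : ℤ → ℤ) (e : ℤ → ℕ), (∀ x, e x ≤ r) → (∀ x y, σ x = σ y → e x = e y → x = y) →
    ∀ (E : Finset ℤ) (x₀ : ℤ), x₀ ∈ E → (∀ x ∈ E, σ x₀ ≤ σ x) → E.card ≤ b →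
      ∀ z : ℤ → L, (∀ v < b, ∑ x ∈ E, checkEntry M σ e (σ x₀ + v) x * z x = 0) → z x₀ = 0

/-- The data defining the check coefficients: distinct nodes and poles `g`, and multipliers `w` such
that each `w d` with `d ≥ 2` lies outside the field generated by `g` and the earlier multipliers. -/
structure IsCoeffTower (g w : ℕ → L) (q b : ℕ) : Prop where
  injOn : Set.InjOn g (Set.Ico 1 q)
  w_zero : w 0 = 1
  w_one : w 1 = 1
  notMem : ∀ d, 2 ≤ d → d < b → w d ∉ Subfield.closure (Set.range g ∪ w '' Set.Iio d)

lemma IsCoeffTower.mono {g w : ℕ → L} {q q' b b' : ℕ} (h : IsCoeffTower g w q b) (hq : q' ≤ q)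
    (hb : b' ≤ b) : IsCoeffTower g w q' b' where
  injOn := h.injOn.mono (Set.Ico_subset_Ico_right hq)
  w_zero := h.w_zero
  w_one := h.w_one
  notMem d hd hdb := h.notMem d hd (hdb.trans_le hb)

/-- The coefficients of the checks, a Cauchy matrix whose rows are scaled by the multipliers. -/
def towerCoeff (g w : ℕ → L) (r d e : ℕ) : L := w d * cauchyEntry g r d e

/-- Row `j` of a system whose first `i` rows are the checks of segments `u, u + 1, …` and whose
remaining rows are Cauchy rows supported on segment `u`. -/
def mixedRow (g w : ℕ → L) (r : ℕ) (σ : X → ℤ) (e : X → ℕ) (u : ℤ) (i j : ℕ) (x : X) : L :=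
  if j < i then checkEntry (towerCoeff g w r) σ e (u + j) x
  else if σ x = u then cauchyEntry g r j (e x) else 0

variable {g w : ℕ → L} {r b q : ℕ} {σ : X → ℤ} {e : X → ℕ} {u : ℤ} {i : ℕ}

lemma cauchyEntry_mem {K : Subfield L} (hg : Set.range g ⊆ K) (d e : ℕ) :
    cauchyEntry g r d e ∈ K := by
  unfold cauchyEntry
  split_ifs
  exacts [K.one_mem, K.zero_mem, K.inv_mem (K.sub_mem (hg ⟨_, rfl⟩) (hg ⟨_, rfl⟩))]

lemma checkEntry_towerCoeff_mem {K : Subfield L} (hg : Set.range g ⊆ K) {n : ℕ}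
    (hw : w '' Set.Iio n ⊆ K) {s : ℤ} {x : X} (hs : s < σ x + n) :
    checkEntry (towerCoeff g w r) σ e s x ∈ K := by
  unfold checkEntry
  split_ifs
  · exact K.mul_mem (hw ⟨_, Set.mem_Iio.2 (by omega), rfl⟩) (cauchyEntry_mem hg _ _)
  · exact K.zero_mem

lemma mixedRow_mem {K : Subfield L} (hg : Set.range g ⊆ K) (hw : w '' Set.Iio i ⊆ K) {j : ℕ}
    {x : X} (hx : u ≤ σ x) : mixedRow g w r σ e u i j x ∈ K := by
  unfold mixedRow
  split_ifs
  exacts [checkEntry_towerCoeff_mem hg hw (by omega), cauchyEntry_mem hg _ _, K.zero_mem]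

lemma mixedRow_eq_zero_of_le {j : ℕ} {x : X} {t : ℕ} (hj : j < t ∨ i ≤ j) (ht : 1 ≤ t)
    (hx : u + t ≤ σ x) : mixedRow g w r σ e u i j x = 0 := by
  unfold mixedRow checkEntry
  split_ifs <;> first | rfl | omega

lemma mixedRow_one_of_eq (hw₀ : w 0 = 1) (j : ℕ) {x : X} (hx : σ x = u) :
    mixedRow g w r σ e u 1 j x = cauchyEntry g r j (e x) := by
  obtain rfl | hj := Nat.eq_zero_or_pos j
  · simp [mixedRow, checkEntry, towerCoeff, hx, hw₀]
  · simp [mixedRow, hx, hj.ne']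

/-- Lowering `i` replaces the topmost check by its part on segment `u`, without its multiplier. -/
lemma mixedRow_succ (j : ℕ) (x : X) :
    mixedRow g w r σ e u (i + 1) j x =
      Function.update (mixedRow g w r σ e u i) i (w i • mixedRow g w r σ e u i i + fun x ↦
        if σ x = u then 0 else checkEntry (towerCoeff g w r) σ e (u + i) x) j x := by
  obtain rfl | hne := eq_or_ne j i
  · by_cases hσ : σ x = u <;> simp [mixedRow, checkEntry, towerCoeff, hσ]
  · simp [mixedRow, hne, show j < i + 1 ↔ j < i by omega]

lemma IsCoeffTower.indepColumns_mixedRow_of_eq (h : IsCoeffTower g w (r + b) b)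
    (her : ∀ x, e x ≤ r) (hinj : ∀ x y, σ x = σ y → e x = e y → x = y) {J : Finset ℕ}
    (hJ0 : 0 ∈ J) (hJb : ∀ j ∈ J, j < b) {C : Finset X} (hcard : C.card = J.card)
    (hC : ∀ x ∈ C, σ x = u) : IndepColumns J (mixedRow g w r σ e u 1) C :=
  (indepColumns_cauchyEntry h.injOn
    (fun x hx y hy hxy ↦ hinj x y ((hC x hx).trans (hC y hy).symm) hxy)
    (fun x _ ↦ her x) hJ0 hJb hcard).congr fun j _ _ hx ↦
      (mixedRow_one_of_eq h.w_zero j (hC _ hx)).symm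

/-- When exactly the right number of columns lies below height `u + t`, the first `t` checks and the
extra rows only see those columns, and on the others the remaining checks form a smaller system. -/
lemma indepColumns_mixedRow_of_blocks {t : ℕ} (ht : 1 ≤ t) (hti : t < i) {J : Finset ℕ}
    (hJi : Finset.range i ⊆ J) {C : Finset X}
    (hlow : IndepColumns (Finset.range t ∪ J \ Finset.range i) (mixedRow g w r σ e u t)
      (C.filter fun x ↦ σ x < u + t))
    (hup : IndepColumns (Finset.range (i - t)) (mixedRow g w r σ e (u + t) (i - t))
      (C.filter fun x ↦ ¬ σ x < u + t)) : IndepColumns J (mixedRow g w r σ e u i) C := by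
  refine hlow.of_block_triangular _ hup (fun j hj ↦ ⟨j, ?_, fun x _ ↦ ?_⟩)
    fun j hj ↦ ⟨t + j, ?_, fun x _ _ ↦ ?_⟩
  · grind
  · have hj' : j < t ∨ i ≤ j := by grind
    split_ifs with hx
    · simp only [mixedRow, show j < i ↔ j < t by omega]
    · exact mixedRow_eq_zero_of_le hj' ht (not_lt.1 hx)
  · exact hJi (Finset.mem_range.2 (by have := Finset.mem_range.1 hj; omega))
  · have := Finset.mem_range.1 hj
    simp only [mixedRow, if_pos this, if_pos (show t + j < i by omega), Nat.cast_add, add_assoc]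

lemma IsCoeffTower.indepColumns_mixedRow_succ (h : IsCoeffTower g w q b) (hi : 1 ≤ i)
    {J : Finset ℕ} (hiJ : i ∈ J) (hib : i < b) {C : Finset X} (hC : IsStaircase σ u i J.card C)
    (hind : IndepColumns J (mixedRow g w r σ e u i) C) :
    IndepColumns J (mixedRow g w r σ e u (i + 1)) C := by
  let K := Subfield.closure (Set.range g ∪ w '' Set.Iio i)
  let rest : X → L := fun x ↦ if σ x = u then 0 else checkEntry (towerCoeff g w r) σ e (u + i) x
  have hgK : Set.range g ⊆ K := Set.subset_union_left.trans Subfield.subset_closure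
  have hwK : w '' Set.Iio i ⊆ K := Set.subset_union_right.trans Subfield.subset_closure
  suffices IndepColumns J (Function.update (mixedRow g w r σ e u i) i
      (w i • mixedRow g w r σ e u i i + rest)) C from
    this.congr fun j _ x _ ↦ (mixedRow_succ j x).symm
  obtain rfl | hi' := hi.eq_or_lt
  · have hCu : ∀ x ∈ C, σ x = u := fun x hx ↦ by
      have := hC.lt le_rfl x hx
      have := hC.le x hx
      omega
    refine hind.congr fun j _ x hx ↦ ?_
    obtain rfl | hne := eq_or_ne j 1
    · simp [rest, h.w_one, hCu x hx]
    · simp [hne]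
  · refine hind.update_row K (h.notMem i hi' hib)
      (fun j _ x hx ↦ mixedRow_mem hgK hwK (hC.le x hx)) (fun x hx ↦ ?_) hC.card_eq hiJ
    have := hC.le x hx
    dsimp only [rest]
    split_ifs
    · exact K.zero_mem
    · exact checkEntry_towerCoeff_mem hgK hwK (by omega)

lemma IsCoeffTower.indepColumns_mixedRow (h : IsCoeffTower g w (r + b) b) (her : ∀ x, e x ≤ r)
    (hinj : ∀ x y, σ x = σ y → e x = e y → x = y) (hi : 1 ≤ i) {J : Finset ℕ}
    (hJi : Finset.range i ⊆ J) (hJb : ∀ j ∈ J, j < b) {C : Finset X}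
    (hC : IsStaircase σ u i J.card C) : IndepColumns J (mixedRow g w r σ e u i) C := by
  induction i using Nat.strong_induction_on generalizing u J C with
  | _ i ih =>
  have hiJ := Finset.card_sdiff_of_subset hJi
  have hcard := Finset.card_le_card hJi
  rw [Finset.card_range] at hiJ hcard
  by_cases htight : ∃ t : ℕ, 1 ≤ t ∧ t < i ∧ (C.filter fun x ↦ σ x < u + t).card + i = t + J.card
  · obtain ⟨t, ht, hti, hcount⟩ := htight
    refine indepColumns_mixedRow_of_blocks ht hti hJi (ih t hti ht Finset.subset_union_left
      (by grind) ?_) (ih (i - t) (by omega) (by omega) subset_rfl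
      (fun j hj ↦ hJb j (hJi (Finset.range_mono (i.sub_le t) hj))) ?_)
    · convert hC.lower hti.le hcount using 1
      rw [Finset.card_union_of_disjoint (by grind [Finset.disjoint_left]), Finset.card_range, hiJ]
      omega
    · simpa using hC.upper hcount
  push Not at htight
  obtain rfl | hi' := hi.eq_or_lt
  · exact h.indepColumns_mixedRow_of_eq her hinj (hJi (by simp)) hJb hC.card_eq fun x hx ↦ by
      have := hC.lt le_rfl x hx
      have := hC.le x hx
      omega
  · obtain ⟨i, rfl⟩ : ∃ i', i = i' + 1 := ⟨i - 1, by omega⟩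
    have hmem : i ∈ J := hJi (by simp)
    have hpred : IsStaircase σ u i J.card C := hC.pred htight
    exact h.indepColumns_mixedRow_succ (by omega) hmem (hJb i hmem) hpred
      (ih i (by omega) (by omega) ((Finset.range_mono (by omega)).trans hJi) hJb hpred)

lemma IsCoeffTower.recoversFirst (h : IsCoeffTower g w (r + b) b) :
    RecoversFirst (towerCoeff g w r) r b := by
  intro σ e her hinj E x₀ hx₀ hE hcard z hz
  obtain ⟨i, hi, hib, hC⟩ := exists_isStaircase hx₀ hE hcard
  refine h.indepColumns_mixedRow her hinj hi subset_rfl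
    (fun j hj ↦ (Finset.mem_range.1 hj).trans_le hib) (by rwa [Finset.card_range]) z
    (fun j hj ↦ ?_) x₀ (Finset.mem_filter.2 ⟨hx₀, by omega⟩)
  have hji := Finset.mem_range.1 hj
  rw [← hz j (hji.trans_le hib), Finset.sum_filter]
  refine Finset.sum_congr rfl fun x _ ↦ ?_
  split_ifs with hx
  · rw [mixedRow, if_pos hji]
  · rw [checkEntry, if_neg (by omega), zero_mul]

end CheckRows

section Positions

variable {a N k : ℕ}

/-- The segment containing position `x`, when each period of `N` positions is cut into `a` segments
whose lengths differ by at most one. -/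
def seg (a N : ℕ) (x : ℤ) : ℤ := a * x / N

/-- The last position of segment `s`; these are the positions of the parity symbols. -/
def segEnd (a N : ℕ) (s : ℤ) : ℤ := ((s + 1) * N - 1) / a

/-- The distance of `x` to the end of its segment. -/
def endDist (a N : ℕ) (x : ℤ) : ℕ := (segEnd a N (seg a N x) - x).toNat

/-- The message coordinate at a non-final position `x`, with `k = N - a`: since `seg a N x` parity
positions lie in `[0, x)`, it is the number of message positions before `x`, reduced modulo `k`. -/
def msgIndex (a N k : ℕ) [NeZero k] (x : ℤ) : Fin k := Fin.ofNat k ((x - seg a N x) % k).toNat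

lemma gc_seg_segEnd (ha : 0 < a) (hN : 0 < N) : GaloisConnection (seg a N) (segEnd a N) := by
  intro x s
  rw [seg, segEnd, ← Int.lt_add_one_iff, Int.ediv_lt_iff_lt_mul (by exact_mod_cast hN),
    Int.le_ediv_iff_mul_le (by exact_mod_cast ha), Int.le_sub_one_iff, mul_comm x]

lemma seg_segEnd (ha : 0 < a) (haN : a ≤ N) (s : ℤ) : seg a N (segEnd a N s) = s := by
  have hN : 0 < N := ha.trans_le haN
  refine le_antisymm ((gc_seg_segEnd ha hN).l_u_le s) ?_
  rw [seg, Int.le_ediv_iff_mul_le (by exact_mod_cast hN), segEnd]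
  have := Int.lt_mul_ediv_self_add (x := (s + 1) * N - 1) (show (0 : ℤ) < a by exact_mod_cast ha)
  have : (a : ℤ) ≤ N := by exact_mod_cast haN
  linarith

lemma seg_add_mul (hN : 0 < N) (x c : ℤ) : seg a N (x + N * c) = seg a N x + a * c := by
  rw [seg, seg, mul_add, mul_left_comm, Int.add_mul_ediv_left _ _ (by exact_mod_cast hN.ne')]

lemma segEnd_add_mul (ha : 0 < a) (s c : ℤ) :
    segEnd a N (s + a * c) = segEnd a N s + N * c := by
  rw [segEnd, segEnd, show (s + a * c + 1) * N - 1 = (s + 1) * N - 1 + a * (N * c) by ring,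
    Int.add_mul_ediv_left _ _ (by exact_mod_cast ha.ne')]

lemma natCast_endDist (ha : 0 < a) (hN : 0 < N) (x : ℤ) :
    (endDist a N x : ℤ) = segEnd a N (seg a N x) - x :=
  Int.toNat_of_nonneg (sub_nonneg.2 ((gc_seg_segEnd ha hN).le_u_l x))

lemma endDist_add_mul (ha : 0 < a) (hN : 0 < N) (x c : ℤ) :
    endDist a N (x + N * c) = endDist a N x := by
  rw [endDist, endDist, seg_add_mul hN, segEnd_add_mul ha, add_sub_add_right_eq_sub]

lemma endDist_segEnd (ha : 0 < a) (haN : a ≤ N) (s : ℤ) : endDist a N (segEnd a N s) = 0 := by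
  rw [endDist, seg_segEnd ha haN, sub_self, Int.toNat_zero]

lemma segEnd_seg_of_endDist_eq_zero (ha : 0 < a) (hN : 0 < N) {x : ℤ} (hx : endDist a N x = 0) :
    segEnd a N (seg a N x) = x := by
  have := natCast_endDist ha hN x
  omega

lemma eq_of_seg_eq_of_endDist_eq (ha : 0 < a) (hN : 0 < N) {x y : ℤ} (hseg : seg a N x = seg a N y)
    (hdist : endDist a N x = endDist a N y) : x = y := by
  have hx := natCast_endDist ha hN x
  have hy := natCast_endDist ha hN y
  rw [hseg, hdist] at hx
  omega

lemma endDist_le {r : ℕ} (ha : 0 < a) (hN : 0 < N) (hr : N ≤ a * (r + 1)) (x : ℤ) :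
    endDist a N x ≤ r := by
  have seg_le : seg a N x * N ≤ a * x := Int.ediv_mul_le _ (by exact_mod_cast hN.ne')
  have segEnd_le : segEnd a N (seg a N x) * a ≤ (seg a N x + 1) * N - 1 :=
    Int.ediv_mul_le _ (by exact_mod_cast ha.ne')
  have : (N : ℤ) ≤ a * (r + 1) := by exact_mod_cast hr
  have hlt : (a : ℤ) * endDist a N x < a * (r + 1) := by
    rw [natCast_endDist ha hN]
    linarith
  have := lt_of_mul_lt_mul_left hlt (by positivity)
  omega

lemma segEnd_seg_add_lt (ha : 0 < a) (hN : 0 < N) (x : ℤ) {v : ℤ} (hv : v < a) :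
    segEnd a N (seg a N x + v) < x + N := by
  have := seg_add_mul (a := a) hN x 1
  rw [← not_le, ← gc_seg_segEnd ha hN, not_le]
  simp only [mul_one] at this
  omega

lemma msgIndex_add_mul [NeZero k] (hN : N = a + k) (x c : ℤ) :
    msgIndex a N k (x + N * c) = msgIndex a N k x := by
  have hk := NeZero.pos k
  rw [msgIndex, msgIndex, seg_add_mul (by omega), show x + N * c - (seg a N x + a * c) =
    x - seg a N x + k * c by rw [hN]; push_cast; ring, Int.add_mul_emod_self_left]

/-- The witness is the position `⌊j N / k⌋`, preceded by `j` message positions. -/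
lemma exists_msgIndex_eq [NeZero k] (ha : 0 < a) (hN : N = a + k) (j : Fin k) :
    ∃ x : ℤ, endDist a N x ≠ 0 ∧ msgIndex a N k x = j := by
  have hk : (0 : ℤ) < k := by exact_mod_cast NeZero.pos k
  have hN0 : (0 : ℤ) < N := by omega
  have hNz : (N : ℤ) = a + k := by exact_mod_cast hN
  let x : ℤ := j * N / k
  have hxle : x * k ≤ j * N := Int.ediv_mul_le _ hk.ne'
  have hltx : j * N < (x + 1) * k := by
    rw [← Int.ediv_lt_iff_lt_mul hk]
    exact Int.lt_succ _
  rw [hNz] at hxle hltx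
  have hseg : seg a N x = x - j := by
    refine le_antisymm (Int.lt_add_one_iff.1 ?_) ?_
    · rw [seg, Int.ediv_lt_iff_lt_mul hN0, hNz]
      linarith
    · rw [seg, Int.le_ediv_iff_mul_le hN0, hNz]
      linarith
  have hseg' : seg a N (x + 1) ≤ seg a N x := by
    rw [hseg, ← Int.lt_add_one_iff, seg, Int.ediv_lt_iff_lt_mul hN0, hNz]
    linarith
  refine ⟨x, ?_, ?_⟩
  · have := (gc_seg_segEnd ha (by omega) _ _).1 hseg'
    have := natCast_endDist ha (by omega) (N := N) x
    omega
  · rw [msgIndex, hseg, sub_sub_cancel, Int.emod_eq_of_lt (by omega) (by omega), Int.toNat_natCast,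
      Fin.ofNat_val_eq_self]

end Positions

section DiagonalCode

lemma isSC_of_map_sub {F : Type} [AddGroup F] {k n b D : ℕ}
    {C : PacketCode F k n}
    (hsub : ∀ m m', C.parity (m - m') = C.parity m - C.parity m')
    (hdecode : ∀ (δ : ℤ → Fin k → F) (t : ℤ) (E : Finset ℤ), (∀ t' ∈ E, t ≤ t') → t ∈ E →
      E.card ≤ b → (∀ t' ≤ t + D, t' ∉ E → δ t' = 0 ∧ C.parity δ t' = 0) → δ t = 0) :
    IsSC C b D := by
  intro m m' _ _ t _ E hE htE hcard hpast hrecv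
  have agree : ∀ t' ≤ t + D, t' ∉ E → m t' = m' t' ∧ C.parity m t' = C.parity m' t' := by
    intro t' ht' htE'
    by_cases hlt : t' < t
    · exact ⟨hpast t' hlt, C.causal m m' t' fun t'' h ↦ hpast t'' (h.trans_lt hlt)⟩
    · exact hrecv t' (not_lt.1 hlt) ht' htE'
  refine sub_eq_zero.1 (hdecode (m - m') t E (fun t' ht' ↦ (hE t' ht').1) htE hcard
    fun t' ht' htE' ↦ ?_)
  rw [hsub]
  exact ⟨sub_eq_zero.2 (agree t' ht' htE').1, sub_eq_zero.2 (agree t' ht' htE').2⟩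

variable {F : Type} [Field F] (M : ℕ → ℕ → F) {a N k : ℕ} [NeZero k]

/-- The symbol of the message packet `u` at position `x`, set to `0` at the parity positions. -/
def msgSym (a N : ℕ) (u : Fin k → F) (x : ℤ) : F :=
  if endDist a N x = 0 then 0 else u (msgIndex a N k x)

/-- The parity symbol that the packet at time `t` carries at the end of segment `s`. It closes a
diagonal, along which time and position increase together. -/
noncomputable def paritySym (a N : ℕ) (m : ℤ → Fin k → F) (t s : ℤ) : F :=
  ∑ t' ∈ Finset.Ioc (t - N) t, checkEntry M (seg a N) (endDist a N) s (segEnd a N s + (t' - t)) *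
    msgSym a N (m t') (segEnd a N s + (t' - t))

/-- The symbol at position `x` of the coded packet at time `t`. Parity symbols are negated, so that
the checks along the diagonals sum to `0`. -/
noncomputable def codeSym (a N : ℕ) (m : ℤ → Fin k → F) (t x : ℤ) : F :=
  if endDist a N x = 0 then -paritySym M a N m t (seg a N x) else m t (msgIndex a N k x)

/-- The code obtained by interleaving along the diagonals the scalar code with checks `M`; the
parity symbols of a packet are those of segments `0, 1, …`. -/
noncomputable def diagonalCode (a N k : ℕ) [NeZero k] : PacketCode F k N where
  parity m t s := paritySym M a N m t s
  causal m m' t h := by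
    funext s
    refine Finset.sum_congr rfl fun t' ht' ↦ ?_
    rw [h t' (Finset.mem_Ioc.1 ht').2]

lemma paritySym_sub (m m' : ℤ → Fin k → F) (t s : ℤ) :
    paritySym M a N (m - m') t s = paritySym M a N m t s - paritySym M a N m' t s := by
  rw [paritySym, paritySym, paritySym, ← Finset.sum_sub_distrib]
  refine Finset.sum_congr rfl fun t' _ ↦ ?_
  rw [← mul_sub]
  congr 1
  unfold msgSym
  split_ifs
  exacts [(sub_zero 0).symm, rfl]

lemma paritySym_add_mul (ha : 0 < a) (hN : N = a + k) (m : ℤ → Fin k → F) (t s c : ℤ) :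
    paritySym M a N m t (s + a * c) = paritySym M a N m t s := by
  refine Finset.sum_congr rfl fun t' _ ↦ ?_
  have hN0 : 0 < N := by omega
  simp only [segEnd_add_mul ha, add_right_comm _ ((N : ℤ) * c), checkEntry, msgSym,
    seg_add_mul hN0, endDist_add_mul ha hN0, msgIndex_add_mul hN, add_le_add_iff_right,
    add_sub_add_right_eq_sub]

lemma codeSym_eq_zero (ha : 0 < a) (hN : N = a + k) {m : ℤ → Fin k → F} {t : ℤ} (hm : m t = 0)
    (hp : (diagonalCode M a N k).parity m t = 0) (x : ℤ) : codeSym M a N m t x = 0 := by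
  unfold codeSym
  split_ifs
  · have ha' : (0 : ℤ) < a := by exact_mod_cast ha
    have hmod := Int.emod_nonneg (seg a N x) ha'.ne'
    have hmod' := Int.emod_lt_of_pos (seg a N x) ha'
    have hparity := congrFun hp ⟨(seg a N x % a).toNat, by omega⟩
    rw [neg_eq_zero, ← Int.emod_add_mul_ediv (seg a N x) a, paritySym_add_mul M ha hN]
    simpa only [diagonalCode, Int.toNat_of_nonneg hmod, Pi.zero_apply] using hparity
  · rw [hm, Pi.zero_apply]

variable {M}

lemma checkEntry_mul_msgSym (hM : ∀ d, d ≠ 0 → M d 0 = 0) (ha : 0 < a) (hN : 0 < N)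
    (m : ℤ → Fin k → F) (t s : ℤ) {x : ℤ} (hx : x ≠ segEnd a N s) :
    checkEntry M (seg a N) (endDist a N) s x * msgSym a N (m t) x =
      checkEntry M (seg a N) (endDist a N) s x * codeSym M a N m t x := by
  by_cases h0 : endDist a N x = 0
  · have hne : seg a N x ≠ s := fun h ↦
      hx (by rw [← h, segEnd_seg_of_endDist_eq_zero ha hN h0])
    have hentry : checkEntry M (seg a N) (endDist a N) s x = 0 := by
      unfold checkEntry
      split_ifs
      · rw [h0, hM _ (by omega)]
      · rfl
    rw [hentry, zero_mul, zero_mul]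
  · rw [msgSym, codeSym, if_neg h0, if_neg h0]

lemma sum_checkEntry_mul_codeSym (hM₀ : M 0 0 = 1) (hM : ∀ d, d ≠ 0 → M d 0 = 0) (ha : 0 < a)
    (haN : a ≤ N) (m : ℤ → Fin k → F) (t s : ℤ) :
    ∑ t' ∈ Finset.Ioc (t - N) t, checkEntry M (seg a N) (endDist a N) s
      (segEnd a N s + (t' - t)) * codeSym M a N m t' (segEnd a N s + (t' - t)) = 0 := by
  have hN : 0 < N := ha.trans_le haN
  have ht : t ∈ Finset.Ioc (t - (N : ℤ)) t := Finset.mem_Ioc.2 ⟨by omega, le_rfl⟩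
  have h0 : endDist a N (segEnd a N s) = 0 := endDist_segEnd ha haN s
  have last : checkEntry M (seg a N) (endDist a N) s (segEnd a N s) *
      codeSym M a N m t (segEnd a N s) = -paritySym M a N m t s := by
    simp [checkEntry, codeSym, seg_segEnd ha haN, h0, hM₀]
  have parity_eq : paritySym M a N m t s = ∑ t' ∈ (Finset.Ioc (t - (N : ℤ)) t).erase t,
      checkEntry M (seg a N) (endDist a N) s (segEnd a N s + (t' - t)) *
        codeSym M a N m t' (segEnd a N s + (t' - t)) := by
    rw [paritySym, ← Finset.add_sum_erase _ _ ht]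
    simp only [sub_self, add_zero, msgSym, h0, if_true, mul_zero, zero_add]
    refine Finset.sum_congr rfl fun t' ht' ↦ checkEntry_mul_msgSym hM ha hN m t' s ?_
    have := Finset.ne_of_mem_erase ht'
    omega
  rw [← Finset.add_sum_erase _ _ ht, ← parity_eq, sub_self, add_zero, last, neg_add_cancel]

/-- The check of segment `s` is completed at time `t + (segEnd a N s - x₀)`, and until then the only
packets that can differ from `0` are the erased ones. -/
lemma sum_erased_checkEntry_mul_codeSym (hM₀ : M 0 0 = 1) (hM : ∀ d, d ≠ 0 → M d 0 = 0)
    (ha : 0 < a) (hN : N = a + k) {D : ℕ} {δ : ℤ → Fin k → F} {t x₀ s : ℤ} {E : Finset ℤ}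
    (hE : ∀ t' ∈ E, t ≤ t')
    (hδ : ∀ t' ≤ t + D, t' ∉ E → δ t' = 0 ∧ (diagonalCode M a N k).parity δ t' = 0)
    (hsN : segEnd a N s < x₀ + N) (hsD : segEnd a N s ≤ x₀ + D) :
    ∑ t' ∈ E, checkEntry M (seg a N) (endDist a N) s (x₀ + (t' - t)) *
      codeSym M a N δ t' (x₀ + (t' - t)) = 0 := by
  have haN : a ≤ N := by omega
  rw [← sum_checkEntry_mul_codeSym hM₀ hM ha haN δ (t + (segEnd a N s - x₀)) s]
  refine Finset.sum_congr_of_eq_on_inter (fun t' ht' ht'_notMem ↦ ?_)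
    (fun t' ht' ht'E ↦ ?_) fun t' _ _ ↦ ?_
  · have late : segEnd a N s < x₀ + (t' - t) := by
      have := hE t' ht'
      rw [Finset.mem_Ioc] at ht'_notMem
      omega
    rw [checkEntry, if_neg, zero_mul]
    rwa [gc_seg_segEnd ha (by omega), not_le]
  · obtain ⟨hm, hp⟩ := hδ t' (by rw [Finset.mem_Ioc] at ht'; omega) ht'E
    rw [codeSym_eq_zero M ha hN hm hp, mul_zero]
  · rw [show segEnd a N s + (t' - (t + (segEnd a N s - x₀))) = x₀ + (t' - t) by ring]

lemma RecoversFirst.isSC_diagonalCode {r b D : ℕ} (h : RecoversFirst M r b) (hM₀ : M 0 0 = 1)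
    (hM : ∀ d, d ≠ 0 → M d 0 = 0) (ha : 0 < a) (hN : N = a + k) (hr : N ≤ a * (r + 1))
    (hba : b ≤ a) (hD : ∀ x, ∀ v < b, segEnd a N (seg a N x + v) ≤ x + D) :
    IsSC (diagonalCode M a N k) b D := by
  have hN0 : 0 < N := by omega
  refine isSC_of_map_sub (fun m m' ↦ funext₂ fun t s ↦ paritySym_sub M m m' t s)
    fun δ t E hE htE hcard hδ ↦ funext fun j ↦ ?_
  obtain ⟨x₀, hx₀, hj⟩ := exists_msgIndex_eq (k := k) ha hN j
  have hrec := h (fun t' ↦ seg a N (x₀ + (t' - t))) (fun t' ↦ endDist a N (x₀ + (t' - t)))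
    (fun t' ↦ endDist_le ha hN0 hr _)
    (fun t₁ t₂ hσ he ↦ by have := eq_of_seg_eq_of_endDist_eq ha hN0 hσ he; omega) E t htE
    (fun t' ht' ↦ (gc_seg_segEnd ha hN0).monotone_l (by have := hE t' ht'; omega)) hcard
    (fun t' ↦ codeSym M a N δ t' (x₀ + (t' - t))) fun v hv ↦ ?_
  · simpa [codeSym, hx₀, hj] using hrec
  · simp only [sub_self, add_zero]
    exact sum_erased_checkEntry_mul_codeSym hM₀ hM ha hN hE hδ
      (segEnd_seg_add_lt ha hN0 x₀ (by exact_mod_cast hv.trans_le hba)) (hD x₀ v hv)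

lemma IsCoeffTower.isLRSC_diagonalCode {g w : ℕ → F} {r τ : ℕ} (h : IsCoeffTower g w (r + a) a)
    (ha : 0 < a) (hN : N = a + k) (hr : N ≤ a * (r + 1)) (hτ : N = τ + 1) :
    IsLRSC (diagonalCode (towerCoeff g w r) a N k) a τ r := by
  have hN0 : 0 < N := by omega
  have coeff_zero : towerCoeff g w r 0 0 = 1 := by simp [towerCoeff, cauchyEntry, h.w_zero]
  have coeff_parity : ∀ d, d ≠ 0 → towerCoeff g w r d 0 = 0 := fun d hd ↦ by
    simp [towerCoeff, cauchyEntry, hd]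
  constructor
  · refine h.recoversFirst.isSC_diagonalCode coeff_zero coeff_parity ha hN hr le_rfl fun x v hv ↦ ?_
    have := segEnd_seg_add_lt ha hN0 x (show (v : ℤ) < a by exact_mod_cast hv)
    omega
  · refine (h.mono (by omega) ha).recoversFirst.isSC_diagonalCode (b := 1)
      coeff_zero coeff_parity ha hN hr ha fun x v hv ↦ ?_
    have := endDist_le ha hN0 hr x
    have := natCast_endDist ha hN0 x
    rw [Nat.lt_one_iff.1 hv, Nat.cast_zero, add_zero]
    omega

end DiagonalCode

lemma IsCoeffTower.map_update {L L' : Type*} [Field L] [Field L'] {g w : ℕ → L} {q b : ℕ}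
    (h : IsCoeffTower g w q b) (hb : 2 ≤ b) (f : L →+* L') {γ : L'} (hγ : γ ∉ f.fieldRange) :
    IsCoeffTower (f ∘ g) (Function.update (f ∘ w) b γ) q (b + 1) where
  injOn := f.injective.comp_injOn h.injOn
  w_zero := by simp [show 0 ≠ b by omega, h.w_zero]
  w_one := by simp [show 1 ≠ b by omega, h.w_one]
  notMem d hd hdb := by
    have closure_eq : Subfield.closure (Set.range (f ∘ g) ∪
        Function.update (f ∘ w) b γ '' Set.Iio d) =
        (Subfield.closure (Set.range g ∪ w '' Set.Iio d)).map f := by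
      rw [RingHom.map_field_closure, Set.image_union, ← Set.range_comp, Set.image_image]
      congr 2
      refine Set.image_congr fun j hj ↦ Function.update_of_ne ?_ _ _
      have := Set.mem_Iio.1 hj
      omega
    rw [closure_eq]
    obtain rfl | hne := eq_or_ne d b
    · rw [Function.update_self]
      rintro ⟨y, -, hy⟩
      exact hγ ⟨y, hy⟩
    · rw [Function.update_of_ne hne]
      rintro ⟨y, hy, hyd⟩
      exact h.notMem d hd (by omega) (f.injective hyd ▸ hy)

lemma exists_isCoeffTower_two {K : Type*} [Field K] [Finite K] :
    ∃ g : ℕ → K, IsCoeffTower g 1 (Nat.card K + 1) 2 := by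
  obtain ⟨g, -, hg⟩ := (Set.finite_Ico 1 (Nat.card K + 1)).exists_injOn_of_encard_le
    (t := (Set.univ : Set K)) (by
      rw [← Finset.coe_Ico, Set.encard_coe_eq_coe_finsetCard]
      simp [Set.encard_univ, ENat.card_eq_coe_natCard])
  exact ⟨g, hg, rfl, rfl, fun d hd hd' ↦ by omega⟩

lemma exists_quadratic_extension (K : Type) [Field K] [Finite K] :
    ∃ (L : Type) (_ : Field L) (_ : Finite L) (f : K →+* L),
      Nat.card L = Nat.card K ^ 2 ∧ ∃ γ, γ ∉ f.fieldRange := by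
  obtain ⟨p, _⟩ := CharP.exists K
  have : Fact p.Prime := ⟨CharP.char_is_prime K p⟩
  let f := algebraMap K (FiniteField.Extension K p 2)
  have hcard := FiniteField.natCard_extension K p 2
  refine ⟨FiniteField.Extension K p 2, inferInstance, inferInstance, f, hcard, ?_⟩
  by_contra! hsurj
  have := Nat.card_congr (Equiv.ofBijective f ⟨f.injective, hsurj⟩)
  have := Finite.one_lt_card (α := K)
  nlinarith

lemma exists_isCoeffTower {q : ℕ} (hq : IsPrimePow q) (n : ℕ) :
    ∃ (F : Type) (_ : Field F) (_ : Finite F) (g w : ℕ → F),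
      Nat.card F = q ^ 2 ^ n ∧ IsCoeffTower g w (q + 1) (n + 2) := by
  induction n with
  | zero =>
    obtain ⟨p, m, hp, hm, rfl⟩ := (isPrimePow_nat_iff q).1 hq
    have : Fact p.Prime := ⟨hp⟩
    have hcard := GaloisField.card p m hm.ne'
    obtain ⟨g, hg⟩ := exists_isCoeffTower_two (K := GaloisField p m)
    exact ⟨GaloisField p m, inferInstance, inferInstance, g, 1, by simpa using hcard, hcard ▸ hg⟩
  | succ n ih =>
    obtain ⟨K, _, _, g, w, hcard, htower⟩ := ih
    obtain ⟨L, _, _, f, hcardL, γ, hγ⟩ := exists_quadratic_extension K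
    exact ⟨L, inferInstance, inferInstance, _, _, by rw [hcardL, hcard, ← pow_mul, ← pow_succ],
      htower.map_update (by omega) f hγ⟩

lemma min_rate_eq_left {a τ r : ℕ} (hpar : τ + 1 ≤ a * (r + 1)) :
    min (((τ : ℚ) + 1 - a) / ((τ : ℚ) + 1)) ((r : ℚ) / ((r : ℚ) + 1)) =
      ((τ : ℚ) + 1 - a) / ((τ : ℚ) + 1) := by
  have : (τ : ℚ) + 1 ≤ a * (r + 1) := by exact_mod_cast hpar
  rw [min_eq_left_iff, div_le_div_iff₀ (by positivity) (by positivity)]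
  linarith

theorem LRSC_small_tau_general (a τ r q : ℕ) (ha : 1 < a) (haτ : a ≤ τ)
    (hpar : τ + 1 ≤ a * (r + 1)) (hq : IsPrimePow q) (hqsize : r + a - 1 ≤ q) :
    (∃ (F : Type) (_ : Field F) (_ : Fintype F),
        Fintype.card F = q ^ 2 ^ (a - 2) ∧
        ∃ C : PacketCode F (τ + 1 - a) (τ + 1), IsLRSC C a τ r) ∧
    min (((τ : ℚ) + 1 - a) / ((τ : ℚ) + 1)) ((r : ℚ) / ((r : ℚ) + 1)) =
      ((τ : ℚ) + 1 - a) / ((τ : ℚ) + 1) := by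
  refine ⟨?_, min_rate_eq_left hpar⟩
  obtain ⟨F, _, _, g, w, hcard, htower⟩ := exists_isCoeffTower hq (a - 2)
  have : NeZero (τ + 1 - a) := ⟨by omega⟩
  have htower' : IsCoeffTower g w (r + a) a := htower.mono (by omega) (by omega)
  exact ⟨F, inferInstance, Fintype.ofFinite F, by rw [Fintype.card_eq_nat_card, hcard],
    _, htower'.isLRSC_diagonalCode (by omega) (by omega) hpar rfl⟩

/-- For `τ + 1 < a(r+1)` and a prime power `q ≥ r + a - 1`, there exists a
rate-optimal `(a, τ, r)` LRSC over the field of size `q^(2^(a-2))` with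
`k = τ+1-a` and `n = τ+1`, and in this parameter range
`min{(τ+1-a)/(τ+1), r/(r+1)} = (τ+1-a)/(τ+1)`. -/
theorem LRSC_small_tau (a τ r q : ℕ) (ha : 1 < a) (haτ : a ≤ τ) (hr : 1 ≤ r)
    (hrτ : r < τ) (hpar : τ + 1 < a * (r + 1)) (hq : IsPrimePow q)
    (hqsize : r + a - 1 ≤ q) :
    (∃ (F : Type) (_ : Field F) (_ : Fintype F),
        Fintype.card F = q ^ 2 ^ (a - 2) ∧
        ∃ C : PacketCode F (τ + 1 - a) (τ + 1), IsLRSC C a τ r) ∧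
    min (((τ : ℚ) + 1 - a) / ((τ : ℚ) + 1)) ((r : ℚ) / ((r : ℚ) + 1)) =
      ((τ : ℚ) + 1 - a) / ((τ : ℚ) + 1) :=
  LRSC_small_tau_general a τ r q ha haτ hpar.le hq hqsize
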